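/- Let Q be a privacy protocol all of whose entries are positive, let n ≥ 1, and let μ be a Borel probability measure on the simplex 𝒫 having a density f, such that the conditional differential entropy h_n(P|Y⃗) is finite. Then MSE^distr_{μ,n}(Q,Π_opt,n) ≥ (a/(2πe)) · e^{(2/(a−1))·h_n(P|Y⃗)}. -/

import Mathlib

/-!
The squared distance from `emb a q` to an estimate `e`, after dropping its component normal to the
hyperplane `∑ x, p x = 1`, is the quadratic form `dᵀ (I + J) d` in `d = q - c`, where `J` is the
all-ones matrix and `det (I + J) = a`. With `m = a - 1`, compare each posterior density with the
Gaussian density whose exponent is `-dᵀ (I + J) d / (2 s)`, taking the *same* variance parameter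
`s` for every outcome `y`. Gibbs' inequality (`gibbs_bound`), whose only analytic input is the
Gaussian integral `integral_exp_quadForm`, bounds each posterior entropy; averaging over `y`
(`hCond_le`) gives, for every `s > 0`,
`h ≤ (m / 2) log (2 π s) - (1 / 2) log (m + 1) + MSE / (2 s)`.
Optimising over `s` gives `m (m + 1)^{1/m} / (2 π e) · e^{2h/m} ≤ MSE`, and
`m (m + 1)^{1/m} ≥ m + 1` because `(1 + 1/m)^m ≤ m + 1` (`mul_log_le`); `bound_of_forall_scale`
combines the two steps by contradiction, at a single well-chosen `s`. The argument is valid for every estimator,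
so nothing specific to the posterior mean is used.
-/

open MeasureTheory Matrix Finset Filter Real

noncomputable section

/-- The probability simplex in `ℝ^a`. -/
def simplex (a : ℕ) : Set (Fin a → ℝ) :=
  {p | (∀ x, 0 ≤ p x) ∧ ∑ x, p x = 1}

/-- Likelihood `L_y(p) = ∏ i, (Qp)_{y i}`. -/
def lik {a b n : ℕ} (Q : Matrix (Fin b) (Fin a) ℝ) (y : Fin n → Fin b)
    (p : Fin a → ℝ) : ℝ :=
  ∏ i, Q.mulVec p (y i)

/-- Mean squared error for distribution estimation. -/
def MSEdistr {a b n : ℕ} (Q : Matrix (Fin b) (Fin a) ℝ) (μ : Measure (Fin a → ℝ))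
    (Est : (Fin n → Fin b) → (Fin a → ℝ)) : ℝ :=
  ∑ y : (Fin n → Fin b), ∫ p, (∑ x, (p x - Est y x) ^ 2) * lik Q y p ∂μ

/-- The posterior-mean estimator for distribution estimation. -/
def PiOpt {a b n : ℕ} (Q : Matrix (Fin b) (Fin a) ℝ) (μ : Measure (Fin a → ℝ))
    (y : Fin n → Fin b) : Fin a → ℝ :=
  fun x => (∫ p, p x * lik Q y p ∂μ) / (∫ p, lik Q y p ∂μ)

/-- Empirical frequency vector of a data vector. -/
def freqVec {a n : ℕ} (xv : Fin n → Fin a) : Fin a → ℝ :=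
  fun α => ((Finset.univ.filter fun i => xv i = α).card : ℝ) / n

/-- Joint weight `w(x⃗,y⃗) = ∫ ∏ i, p_{x_i} Q_{y_i|x_i} dμ(p)`. -/
def wgt {a b n : ℕ} (Q : Matrix (Fin b) (Fin a) ℝ) (μ : Measure (Fin a → ℝ))
    (xv : Fin n → Fin a) (y : Fin n → Fin b) : ℝ :=
  ∫ p, (∏ i, p (xv i) * Q (y i) (xv i)) ∂μ

/-- Mean squared error for frequency estimation. -/
def MSEfreq {a b n : ℕ} (Q : Matrix (Fin b) (Fin a) ℝ) (μ : Measure (Fin a → ℝ))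
    (Est : (Fin n → Fin b) → (Fin a → ℝ)) : ℝ :=
  ∑ xv : (Fin n → Fin a), ∑ y : (Fin n → Fin b),
    wgt Q μ xv y * ∑ α, (freqVec xv α - Est y α) ^ 2

/-- The posterior-mean estimator for frequency estimation. -/
def PhiOpt {a b n : ℕ} (Q : Matrix (Fin b) (Fin a) ℝ) (μ : Measure (Fin a → ℝ))
    (y : Fin n → Fin b) : Fin a → ℝ :=
  fun α => (∑ xv : (Fin n → Fin a), wgt Q μ xv y * freqVec xv α) /
    (∑ xv : (Fin n → Fin a), wgt Q μ xv y)

/-- `P(φ, y⃗) = ∑_{x⃗ : F(x⃗) = φ} w(x⃗, y⃗)`. -/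
def Pphi {a b n : ℕ} (Q : Matrix (Fin b) (Fin a) ℝ) (μ : Measure (Fin a → ℝ))
    (φ : Fin a → ℝ) (y : Fin n → Fin b) : ℝ := by
  classical
  exact ∑ xv ∈ Finset.univ.filter (fun xv : Fin n → Fin a => freqVec xv = φ), wgt Q μ xv y

/-- Conditional Shannon entropy `H_n(F | Y⃗)` (terms with zero probability vanish since
`Real.log 0 = 0`). -/
def HFcond {a b : ℕ} (Q : Matrix (Fin b) (Fin a) ℝ) (μ : Measure (Fin a → ℝ))
    (n : ℕ) : ℝ := by
  classical
  exact -(∑ y : (Fin n → Fin b), ∑ φ ∈ Finset.image (freqVec (a := a) (n := n)) Finset.univ,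
      Pphi Q μ φ y * Real.log (Pphi Q μ φ y /
        ∑ φ' ∈ Finset.image (freqVec (a := a) (n := n)) Finset.univ, Pphi Q μ φ' y))

/-- The set `Δ = {q ∈ ℝ^m : q ≥ 0, ∑ q ≤ 1}`. -/
def stdCorner (m : ℕ) : Set (Fin m → ℝ) :=
  {q | (∀ i, 0 ≤ q i) ∧ ∑ i, q i ≤ 1}

/-- The identification `Δ ⊂ ℝ^{a-1} → 𝒫 ⊂ ℝ^a`,
`q ↦ (q_1, …, q_{a-1}, 1 - ∑ q_i)`. -/
def emb (a : ℕ) (q : Fin (a - 1) → ℝ) : Fin a → ℝ :=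
  fun x => if h : (x : ℕ) < a - 1 then q ⟨x.1, h⟩ else 1 - ∑ i, q i

/-- `μ` has density `f` (w.r.t. Lebesgue measure on `Δ`). -/
def IsDensity {a : ℕ} (μ : Measure (Fin a → ℝ)) (f : (Fin (a - 1) → ℝ) → ℝ) : Prop :=
  Measurable f ∧ (∀ q, 0 ≤ f q) ∧ (∫ q in stdCorner (a - 1), f q) = 1 ∧
  ∀ g : (Fin a → ℝ) → ℝ, Measurable g → (∃ C, ∀ p, |g p| ≤ C) →
    (∫ p, g p ∂μ) = ∫ q in stdCorner (a - 1), g (emb a q) * f q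

/-- `μ` has continuous density `f`. -/
def IsContDensity {a : ℕ} (μ : Measure (Fin a → ℝ)) (f : (Fin (a - 1) → ℝ) → ℝ) : Prop :=
  ContinuousOn f (stdCorner (a - 1)) ∧ (∀ q, 0 ≤ f q) ∧
  (∫ q in stdCorner (a - 1), f q) = 1 ∧
  ∀ g : (Fin a → ℝ) → ℝ, Measurable g → (∃ C, ∀ p, |g p| ≤ C) →
    (∫ p, g p ∂μ) = ∫ q in stdCorner (a - 1), g (emb a q) * f q

/-- Normalisation constant `C_{y⃗} = ∫_Δ f(q) L_{y⃗}(p(q)) dλ(q)`. -/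
def Cw {a b n : ℕ} (Q : Matrix (Fin b) (Fin a) ℝ) (f : (Fin (a - 1) → ℝ) → ℝ)
    (y : Fin n → Fin b) : ℝ :=
  ∫ q in stdCorner (a - 1), f q * lik Q y (emb a q)

/-- Posterior density `g_{y⃗}(q) = f(q) L_{y⃗}(p(q)) / C_{y⃗}`. -/
def gpost {a b n : ℕ} (Q : Matrix (Fin b) (Fin a) ℝ) (f : (Fin (a - 1) → ℝ) → ℝ)
    (y : Fin n → Fin b) (q : Fin (a - 1) → ℝ) : ℝ :=
  f q * lik Q y (emb a q) / Cw Q f y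

/-- Conditional differential entropy `h_n(P | Y⃗)`. -/
def hCond {a b : ℕ} (Q : Matrix (Fin b) (Fin a) ℝ) (f : (Fin (a - 1) → ℝ) → ℝ)
    (n : ℕ) : ℝ :=
  ∑ y : (Fin n → Fin b),
    Cw Q f y * (-(∫ q in stdCorner (a - 1), gpost Q f y q * Real.log (gpost Q f y q)))

/-- The matrix `D_p = Qᵀ · diag(Qp)⁻¹ · Q`. -/
def Dmat {a b : ℕ} (Q : Matrix (Fin b) (Fin a) ℝ) (p : Fin a → ℝ) :
    Matrix (Fin a) (Fin a) ℝ :=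
  Qᵀ * Matrix.diagonal (fun y => (Q.mulVec p y)⁻¹) * Q

/-- The constant `γ_μ(Q)`. -/
def gammaMu {a b : ℕ} (Q : Matrix (Fin b) (Fin a) ℝ) (μ : Measure (Fin a → ℝ)) : ℝ :=
  (((a : ℝ) - 1) / 2) * Real.log (2 * π * Real.exp 1) -
    (1 / 2) * ∫ p, Real.log (Dmat Q p).det ∂μ

/-- The truncated column `w_x = (Q_{1|x}, …, Q_{b-1|x})`. -/
def wcol {a b : ℕ} (Q : Matrix (Fin b) (Fin a) ℝ) (x : Fin a) : Fin (b - 1) → ℝ :=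
  fun y => Q ⟨y.1, lt_of_lt_of_le y.2 (Nat.sub_le b 1)⟩ x

/-- The matrix `E_x = diag(w_x) - w_x w_xᵀ`. -/
def Emat {a b : ℕ} (Q : Matrix (Fin b) (Fin a) ℝ) (x : Fin a) :
    Matrix (Fin (b - 1)) (Fin (b - 1)) ℝ :=
  Matrix.diagonal (wcol Q x) - Matrix.vecMulVec (wcol Q x) (wcol Q x)

/-- The matrix `G_p = ∑ x, p_x E_x`. -/
def Gmat {a b : ℕ} (Q : Matrix (Fin b) (Fin a) ℝ) (p : Fin a → ℝ) :
    Matrix (Fin (b - 1)) (Fin (b - 1)) ℝ :=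
  ∑ x, p x • Emat Q x

/-- The constant `δ_μ(Q)`. -/
def deltaMu {a b : ℕ} (Q : Matrix (Fin b) (Fin a) ℝ) (μ : Measure (Fin a → ℝ)) : ℝ :=
  gammaMu Q μ +
    (1 / 2) * ∫ p, (Real.log (Gmat Q p).det - ∑ y, Real.log (Q.mulVec p y)) ∂μ

/-- `Q` satisfies `ε`-local differential privacy. -/
def SatisfiesLDP {a b : ℕ} (Q : Matrix (Fin b) (Fin a) ℝ) (ε : ℝ) : Prop :=
  ∀ x x' : Fin a, ∀ y : Fin b, Q y x' ≤ Real.exp ε * Q y x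

/-! ### The Gaussian integral for `I + J` -/

/-- The quadratic form `dᵀ (I + J) d`, with `J` the all-ones matrix. -/
def quadForm {m : ℕ} (d : Fin m → ℝ) : ℝ := ∑ i, d i ^ 2 + (∑ i, d i) ^ 2

/-- The symmetric matrix `I + t J`. For the right `t` it is the square root of `I + J`. -/
def shearMat (m : ℕ) (t : ℝ) : Matrix (Fin m) (Fin m) ℝ :=
  1 + replicateCol Unit (fun _ => t) * replicateRow Unit (fun _ => (1 : ℝ))

lemma shearMat_mulVec {m : ℕ} (t : ℝ) (d : Fin m → ℝ) (i : Fin m) :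
    (shearMat m t).mulVec d i = d i + t * ∑ j, d j := by
  rw [shearMat, Matrix.add_mulVec, Matrix.one_mulVec, Pi.add_apply]
  simp [Matrix.mulVec, dotProduct, Matrix.mul_apply, Finset.mul_sum]

lemma shearMat_det {m : ℕ} (t : ℝ) : (shearMat m t).det = 1 + m * t := by
  rw [shearMat, Matrix.det_one_add_replicateCol_mul_replicateRow]
  simp [dotProduct]

lemma sum_shearMat_mulVec_sq {m : ℕ} {t : ℝ} (ht : m * t ^ 2 + 2 * t = 1) (d : Fin m → ℝ) :
    ∑ i, (shearMat m t).mulVec d i ^ 2 = quadForm d := by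
  have h : ∀ i, (shearMat m t).mulVec d i ^ 2
      = d i ^ 2 + (2 * t * ∑ j, d j) * d i + (t * ∑ j, d j) ^ 2 := by
    intro i; rw [shearMat_mulVec]; ring
  simp only [h, Finset.sum_add_distrib, ← Finset.mul_sum, Finset.sum_const, Finset.card_univ,
    Fintype.card_fin, nsmul_eq_mul, quadForm]
  linear_combination (∑ j, d j) ^ 2 * ht

lemma integral_exp_quadForm {m : ℕ} (hm : 1 ≤ m) {s : ℝ} (hs : 0 < s) (c : Fin m → ℝ) :
    ∫ q : Fin m → ℝ, Real.exp (-quadForm (q - c) / (2 * s))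
      = √(2 * π * s) ^ m / √((m : ℝ) + 1) := by
  have hm0 : (0 : ℝ) < m := by exact_mod_cast hm
  set r := √((m : ℝ) + 1) with hr
  have hr2 : r ^ 2 = m + 1 := Real.sq_sqrt (by positivity)
  have hr0 : 0 < r := Real.sqrt_pos.2 (by positivity)
  -- the positive root of `m t² + 2 t = 1`, for which `(I + t J)² = I + J`
  set t := (r - 1) / m with htdef
  have ht : m * t ^ 2 + 2 * t = 1 := by
    rw [htdef]; field_simp; linear_combination hr2
  have hdet : (shearMat m t).det = r := by
    rw [shearMat_det, htdef]; field_simp; ring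
  rw [integral_sub_right_eq_self (fun q : Fin m → ℝ => Real.exp (-quadForm q / (2 * s))) c]
  have hprod : ∀ q : Fin m → ℝ, Real.exp (-quadForm q / (2 * s))
      = ∏ i, Real.exp (-(1 / (2 * s)) * (toLin' (shearMat m t) q i) ^ 2) := by
    intro q
    rw [← Real.exp_sum, ← Finset.mul_sum, ← sum_shearMat_mulVec_sq ht]
    simp only [toLin'_apply]
    congr 1; ring
  simp only [hprod]
  rw [← integral_map (φ := toLin' (shearMat m t)) (μ := volume)
    (f := fun v : Fin m → ℝ => ∏ i, Real.exp (-(1 / (2 * s)) * (v i) ^ 2))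
    (LinearMap.continuous_of_finiteDimensional _).aemeasurable
    (Continuous.aestronglyMeasurable (by fun_prop)),
    Real.map_matrix_volume_pi_eq_smul_volume_pi (by rw [hdet]; exact hr0.ne'), hdet,
    integral_smul_measure,
    integral_fintype_prod_volume_eq_prod (f := fun (_ : Fin m) (x : ℝ) =>
      Real.exp (-(1 / (2 * s)) * x ^ 2)),
    Finset.prod_congr rfl (fun _ _ => integral_gaussian _), Finset.prod_const]
  rw [ENNReal.toReal_ofReal (abs_nonneg _), abs_of_pos (inv_pos.2 hr0)]
  simp only [Finset.card_univ, Fintype.card_fin, smul_eq_mul]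
  rw [show π / (1 / (2 * s)) = 2 * π * s by field_simp]
  field_simp

/-! ### The simplex and its corner parametrisation -/

lemma emb_mem_simplex {m : ℕ} {q : Fin m → ℝ} (hq : q ∈ stdCorner m) :
    emb (m + 1) q ∈ simplex (m + 1) := by
  refine ⟨fun x => ?_, ?_⟩
  · unfold emb
    split_ifs with h
    · exact hq.1 _
    · exact sub_nonneg.2 hq.2
  · rw [Fin.sum_univ_castSucc]
    simp [emb]

lemma isCompact_simplex (a : ℕ) : IsCompact (simplex a) := isCompact_stdSimplex ℝ (Fin a)

lemma measurableSet_stdCorner (m : ℕ) : MeasurableSet (stdCorner m) := by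
  have : stdCorner m = (⋂ i, {q : Fin m → ℝ | 0 ≤ q i}) ∩ {q | ∑ i, q i ≤ 1} := by
    ext q; simp [stdCorner]
  rw [this]
  exact (MeasurableSet.iInter fun i => measurableSet_le (by fun_prop) (by fun_prop)).inter
    (measurableSet_le (by fun_prop) (by fun_prop))

lemma continuous_emb (m : ℕ) : Continuous (fun q : Fin m → ℝ => emb (m + 1) q) := by
  refine continuous_pi fun x => ?_
  unfold emb
  split_ifs with h
  · exact continuous_apply (A := fun _ : Fin m => ℝ) _
  · exact continuous_const.sub (continuous_finsetSum _ fun i _ => continuous_apply i)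

/-- The centre `c` is the projection of `e` onto the hyperplane `∑ x, p x = 1`, so the distance
only decreases when `e` is replaced by it. -/
lemma quadForm_le_dist_sq {m : ℕ} (e : Fin (m + 1) → ℝ) (q : Fin m → ℝ) :
    quadForm (q - fun i => e i.castSucc - (∑ x, e x - 1) / (m + 1))
      ≤ ∑ x, (emb (m + 1) q x - e x) ^ 2 := by
  set δ := (∑ x, e x - 1) / ((m : ℝ) + 1) with hδ
  have hm : (m : ℝ) + 1 ≠ 0 := by positivity
  have hδ' : (m + 1) * δ = ∑ i : Fin m, e i.castSucc + e (Fin.last m) - 1 := by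
    rw [hδ, Fin.sum_univ_castSucc]; field_simp
  have hc : ∀ i : Fin m, emb (m + 1) q i.castSucc = q i := fun i => by simp [emb]
  have hl : emb (m + 1) q (Fin.last m) = 1 - ∑ i : Fin m, q i := by simp [emb]
  rw [Fin.sum_univ_castSucc, hl]
  simp only [hc, quadForm, Pi.sub_apply]
  set d : Fin m → ℝ := fun i => q i - (e i.castSucc - δ) with hd
  have h1 : ∀ i : Fin m, (q i - e i.castSucc) ^ 2 = d i ^ 2 - 2 * δ * d i + δ ^ 2 := by
    intro i; simp only [hd]; ring
  have hS : ∑ i, d i = ∑ i, q i - ∑ i : Fin m, e i.castSucc + m * δ := by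
    simp only [hd, Finset.sum_sub_distrib, Finset.sum_const, Finset.card_univ, Fintype.card_fin,
      nsmul_eq_mul]
    ring
  have h2 : 1 - ∑ i, q i - e (Fin.last m) = -(∑ i, d i) - δ := by
    rw [hS]; linear_combination hδ'
  rw [h2]
  simp only [h1, Finset.sum_add_distrib, Finset.sum_sub_distrib, ← Finset.mul_sum,
    Finset.sum_const, Finset.card_univ, Fintype.card_fin, nsmul_eq_mul]
  change ∑ i, d i ^ 2 + (∑ i, d i) ^ 2 ≤ _
  have : (0 : ℝ) ≤ m * δ ^ 2 := by positivity
  nlinarith [sq_nonneg δ]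

/-! ### Transferring integrals through the density -/

lemma IsDensity.integrableOn {m : ℕ} {μ : Measure (Fin (m + 1) → ℝ)} {f : (Fin m → ℝ) → ℝ}
    (hf : IsDensity (a := m + 1) μ f) {g : (Fin (m + 1) → ℝ) → ℝ} (hg : Continuous g) :
    IntegrableOn (fun q => g (emb (m + 1) q) * f q) (stdCorner m) := by
  have hfi : Integrable f (volume.restrict (stdCorner m)) :=
    .of_integral_ne_zero (by rw [show ∫ q in stdCorner m, f q = 1 from hf.2.2.1]; exact one_ne_zero)
  obtain ⟨C, hC⟩ := (isCompact_simplex (m + 1)).exists_bound_of_continuousOn hg.continuousOn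
  refine hfi.bdd_mul (c := C) (hg.comp (continuous_emb m)).aestronglyMeasurable ?_
  filter_upwards [ae_restrict_mem (measurableSet_stdCorner m)] with q hq
  exact hC _ (emb_mem_simplex hq)

/-- The density formula, assumed for bounded functions, extends to continuous ones since `μ` is
carried by the compact simplex. -/
lemma IsDensity.integral_eq {m : ℕ} {μ : Measure (Fin (m + 1) → ℝ)} [IsProbabilityMeasure μ]
    {f : (Fin m → ℝ) → ℝ}
    (hf : IsDensity (a := m + 1) μ f) {g : (Fin (m + 1) → ℝ) → ℝ} (hg : Continuous g) :
    ∫ p, g p ∂μ = ∫ q in stdCorner m, g (emb (m + 1) q) * f q := by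
  have hS : MeasurableSet (simplex (m + 1)) := (isCompact_simplex _).isClosed.measurableSet
  have hnull : μ (simplex (m + 1))ᶜ = 0 := by
    have h := hf.2.2.2 ((simplex (m + 1))ᶜ.indicator 1)
      (measurable_one.indicator hS.compl)
      ⟨1, fun p => by by_cases h : p ∈ (simplex (m + 1))ᶜ <;> simp [h]⟩
    rw [integral_indicator_one hS.compl] at h
    have h0 : ∫ q in stdCorner m,
        ((simplex (m + 1))ᶜ.indicator (1 : (Fin (m + 1) → ℝ) → ℝ)) (emb (m + 1) q) * f q = 0 := by
      rw [setIntegral_congr_fun (g := fun _ => (0 : ℝ)) (measurableSet_stdCorner m)]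
      · simp
      · intro q hq
        simp [emb_mem_simplex hq]
    exact (measureReal_eq_zero_iff).1 (h.trans h0)
  obtain ⟨C, hC⟩ := (isCompact_simplex (m + 1)).exists_bound_of_continuousOn hg.continuousOn
  have h := hf.2.2.2 ((simplex (m + 1)).indicator g) (hg.measurable.indicator hS)
    ⟨max C 0, fun p => by
      by_cases h : p ∈ simplex (m + 1)
      · rw [Set.indicator_of_mem h]; exact (hC p h).trans (le_max_left _ _)
      · simp [h]⟩
  have hae : g =ᵐ[μ] (simplex (m + 1)).indicator g := by
    have hmem : ∀ᵐ p ∂μ, p ∈ simplex (m + 1) := hnull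
    filter_upwards [hmem] with p hp
    rw [Set.indicator_of_mem hp]
  rw [integral_congr_ae hae, h]
  refine setIntegral_congr_fun (measurableSet_stdCorner m) fun q hq => ?_
  rw [Set.indicator_of_mem (emb_mem_simplex (m := m) hq)]

/-! ### The likelihood -/

lemma continuous_lik {a b n : ℕ} (Q : Matrix (Fin b) (Fin a) ℝ) (y : Fin n → Fin b) :
    Continuous (lik Q y) := by
  unfold lik Matrix.mulVec dotProduct
  fun_prop

lemma lik_nonneg {a b n : ℕ} {Q : Matrix (Fin b) (Fin a) ℝ} (hQ : ∀ y x, 0 < Q y x)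
    (y : Fin n → Fin b) {p : Fin a → ℝ} (hp : p ∈ simplex a) : 0 ≤ lik Q y p := by
  unfold lik Matrix.mulVec dotProduct
  exact Finset.prod_nonneg fun i _ => Finset.sum_nonneg fun x _ =>
    mul_nonneg (hQ _ _).le (hp.1 x)

lemma sum_lik {a b n : ℕ} {Q : Matrix (Fin b) (Fin a) ℝ} (hQ : ∀ x, ∑ y, Q y x = 1)
    {p : Fin a → ℝ} (hp : p ∈ simplex a) : ∑ y : Fin n → Fin b, lik Q y p = 1 := by
  have h1 : ∑ y, Q.mulVec p y = 1 := by
    simp only [Matrix.mulVec, dotProduct]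
    rw [Finset.sum_comm]
    simp only [← Finset.sum_mul, hQ, one_mul]
    exact hp.2
  have := Finset.prod_univ_sum (fun _ : Fin n => (Finset.univ : Finset (Fin b)))
    (fun _ y => Q.mulVec p y)
  simp only [h1, Finset.prod_const_one, Fintype.piFinset_univ] at this
  exact this.symm

/-! ### The entropy bound -/

/-- Minus the logarithm of the normalising constant of the Gaussian on `ℝ^m` with precision
matrix `(I + J) / s`. -/
def gaussLog (m : ℕ) (s : ℝ) : ℝ := m / 2 * Real.log (2 * π * s) - 1 / 2 * Real.log (m + 1)

lemma exp_neg_gaussLog (m : ℕ) {s : ℝ} (hs : 0 < s) :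
    Real.exp (-gaussLog m s) * (√(2 * π * s) ^ m / √((m : ℝ) + 1)) = 1 := by
  have h1 : √(2 * π * s) ^ m / √((m : ℝ) + 1) = Real.exp (gaussLog m s) := by
    rw [gaussLog, Real.exp_sub]
    congr 1
    · rw [show (m : ℝ) / 2 * Real.log (2 * π * s) = m * Real.log √(2 * π * s) by
        rw [Real.log_sqrt (by positivity)]; ring, Real.exp_nat_mul,
        Real.exp_log (Real.sqrt_pos.2 (by positivity))]
    · rw [show 1 / 2 * Real.log ((m : ℝ) + 1) = Real.log √((m : ℝ) + 1) by
        rw [Real.log_sqrt (by positivity)]; ring,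
        Real.exp_log (Real.sqrt_pos.2 (by positivity))]
  rw [h1, ← Real.exp_add]; simp

lemma mul_sub_exp_le_mul_log {g u : ℝ} (hg : 0 ≤ g) : g * u + g - Real.exp u ≤ g * Real.log g := by
  rcases hg.eq_or_lt with rfl | hg
  · simp [Real.exp_nonneg]
  · have h := Real.log_le_sub_one_of_pos (div_pos (Real.exp_pos u) hg)
    rw [Real.log_div (Real.exp_pos u).ne' hg.ne', Real.log_exp] at h
    have h2 := mul_le_mul_of_nonneg_left h hg.le
    have h3 : g * (Real.exp u / g - 1) = Real.exp u - g := by field_simp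
    linarith

/-- Gibbs' inequality against the Gaussian centred at the projection of `e`: the differential
entropy of a density on the corner is at most its cross entropy with that Gaussian, which
`quadForm_le_dist_sq` bounds in terms of the mean squared distance to `e`. -/
lemma gibbs_bound {m : ℕ} (hm : 1 ≤ m) {s : ℝ} (hs : 0 < s) (e : Fin (m + 1) → ℝ)
    {g : (Fin m → ℝ) → ℝ} (hg0 : ∀ q ∈ stdCorner m, 0 ≤ g q)
    (hgi : IntegrableOn g (stdCorner m)) (hg1 : ∫ q in stdCorner m, g q = 1)
    (hgd : IntegrableOn (fun q => g q * ∑ x, (emb (m + 1) q x - e x) ^ 2) (stdCorner m))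
    (hgl : IntegrableOn (fun q => g q * Real.log (g q)) (stdCorner m)) :
    -(∫ q in stdCorner m, g q * Real.log (g q)) ≤
      gaussLog m s + (∫ q in stdCorner m, g q * ∑ x, (emb (m + 1) q x - e x) ^ 2) / (2 * s) := by
  set c : Fin m → ℝ := fun i => e i.castSucc - (∑ x, e x - 1) / (m + 1) with hc
  set D : (Fin m → ℝ) → ℝ := fun q => ∑ x, (emb (m + 1) q x - e x) ^ 2 with hD
  set φ : (Fin m → ℝ) → ℝ := fun q =>
    Real.exp (-gaussLog m s) * Real.exp (-quadForm (q - c) / (2 * s)) with hφ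
  have hφ1 : ∫ q, φ q = 1 := by
    simp only [hφ]
    rw [integral_const_mul, integral_exp_quadForm hm hs, exp_neg_gaussLog m hs]
  have hφi : Integrable φ := .of_integral_ne_zero (by rw [hφ1]; exact one_ne_zero)
  have hφle : ∫ q in stdCorner m, φ q ≤ 1 := by
    rw [← hφ1]
    exact setIntegral_le_integral hφi (Eventually.of_forall fun q => by simp only [hφ]; positivity)
  have hpt : ∀ q ∈ stdCorner m,
      (1 - gaussLog m s) * g q - g q * D q / (2 * s) - φ q ≤ g q * Real.log (g q) := by
    intro q hq
    have h1 := mul_sub_exp_le_mul_log (u := -gaussLog m s - quadForm (q - c) / (2 * s)) (hg0 q hq)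
    have h2 : Real.exp (-gaussLog m s - quadForm (q - c) / (2 * s)) = φ q := by
      simp only [hφ]; rw [← Real.exp_add]; congr 1; ring
    have h3 : g q * (quadForm (q - c) / (2 * s)) ≤ g q * (D q / (2 * s)) :=
      mul_le_mul_of_nonneg_left
        (div_le_div_of_nonneg_right (quadForm_le_dist_sq e q) (by positivity)) (hg0 q hq)
    rw [h2] at h1
    have h4 : g q * (D q / (2 * s)) = g q * D q / (2 * s) := by ring
    nlinarith
  have hI1 : IntegrableOn (fun q => (1 - gaussLog m s) * g q) (stdCorner m) := hgi.const_mul _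
  have hI2 : IntegrableOn (fun q => g q * D q / (2 * s)) (stdCorner m) := hgd.div_const _
  have hint := setIntegral_mono_on ((hI1.sub hI2).sub hφi.integrableOn) hgl
    (measurableSet_stdCorner m) hpt
  simp only [Pi.sub_apply] at hint
  rw [integral_sub (f := fun q => (1 - gaussLog m s) * g q - g q * D q / (2 * s))
    (hI1.sub hI2) hφi.integrableOn, integral_sub hI1 hI2, integral_const_mul,
    integral_div, hg1] at hint
  linarith

/-- The cross-entropy bound averaged over the outcomes `y`, at a common scale `s`. -/
lemma hCond_le {m b n : ℕ} (hm : 1 ≤ m) {Q : Matrix (Fin b) (Fin (m + 1)) ℝ}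
    (hQpos : ∀ y x, 0 < Q y x) (hQcol : ∀ x, ∑ y, Q y x = 1)
    {μ : Measure (Fin (m + 1) → ℝ)} [IsProbabilityMeasure μ]
    {f : (Fin m → ℝ) → ℝ} (hf : IsDensity (a := m + 1) μ f)
    (hfin : ∀ y : (Fin n → Fin b),
      IntegrableOn (fun q => gpost (a := m + 1) Q f y q * Real.log (gpost (a := m + 1) Q f y q))
        (stdCorner m))
    (Est : (Fin n → Fin b) → (Fin (m + 1) → ℝ)) {s : ℝ} (hs : 0 < s) :
    hCond (a := m + 1) Q f n ≤ gaussLog m s + MSEdistr Q μ Est / (2 * s) := by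
  have hI : ∀ y : Fin n → Fin b,
      IntegrableOn (fun q => f q * lik Q y (emb (m + 1) q)) (stdCorner m) := fun y => by
    refine (hf.integrableOn (continuous_lik Q y)).congr_fun (fun q _ => mul_comm _ _)
      (measurableSet_stdCorner m)
  have hsum : ∑ y : Fin n → Fin b, Cw (a := m + 1) Q f y = 1 := by
    change ∑ y : Fin n → Fin b, ∫ q in stdCorner m, f q * lik Q y (emb (m + 1) q) = 1
    rw [← integral_finsetSum _ fun y _ => hI y,
      ← show ∫ q in stdCorner m, f q = 1 from hf.2.2.1]
    refine setIntegral_congr_fun (measurableSet_stdCorner m) fun q hq => ?_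
    rw [← Finset.mul_sum, sum_lik hQcol (emb_mem_simplex hq), mul_one]
  have hterm : ∀ y : Fin n → Fin b,
      Cw (a := m + 1) Q f y * (-(∫ q in stdCorner m,
        gpost (a := m + 1) Q f y q * Real.log (gpost (a := m + 1) Q f y q))) ≤
      Cw (a := m + 1) Q f y * gaussLog m s +
        (∫ p, (∑ x, (p x - Est y x) ^ 2) * lik Q y p ∂μ) / (2 * s) := by
    intro y
    have hDc : Continuous fun p : Fin (m + 1) → ℝ => (∑ x, (p x - Est y x) ^ 2) * lik Q y p :=
      Continuous.mul (by fun_prop) (continuous_lik Q y)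
    rw [hf.integral_eq hDc]
    have hDI := hf.integrableOn hDc
    have hw0 : ∀ q ∈ stdCorner m, 0 ≤ f q * lik Q y (emb (m + 1) q) := fun q hq =>
      mul_nonneg (hf.2.1 q) (lik_nonneg hQpos y (emb_mem_simplex hq))
    have hC0 : 0 ≤ Cw (a := m + 1) Q f y := setIntegral_nonneg (measurableSet_stdCorner m) hw0
    rcases hC0.eq_or_lt with hC | hC
    · rw [← hC, zero_mul, zero_mul, zero_add]
      refine div_nonneg (setIntegral_nonneg (measurableSet_stdCorner m) fun q hq => ?_)
        (by positivity)
      exact mul_nonneg (mul_nonneg (Finset.sum_nonneg fun x _ => sq_nonneg _)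
        (lik_nonneg hQpos y (emb_mem_simplex hq))) (hf.2.1 q)
    · have hfun : ∀ q, gpost (a := m + 1) Q f y q * ∑ x, (emb (m + 1) q x - Est y x) ^ 2 =
          ((∑ x, (emb (m + 1) q x - Est y x) ^ 2) * lik Q y (emb (m + 1) q)) * f q /
            Cw (a := m + 1) Q f y := fun q => by unfold gpost; ring
      have hG := gibbs_bound hm hs (Est y) (g := gpost (a := m + 1) Q f y)
        (fun q hq => div_nonneg (hw0 q hq) hC.le) ((hI y).div_const _)
        (by
          change ∫ q in stdCorner m, f q * lik Q y (emb (m + 1) q) / Cw (a := m + 1) Q f y = 1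
          rw [integral_div]; exact div_self hC.ne')
        (by simp only [hfun]; exact hDI.div_const _) (hfin y)
      simp only [hfun, integral_div] at hG
      refine (mul_le_mul_of_nonneg_left hG hC.le).trans_eq ?_
      field_simp
  unfold hCond MSEdistr
  refine (Finset.sum_le_sum fun y _ => hterm y).trans_eq ?_
  rw [Finset.sum_add_distrib, ← Finset.sum_mul, hsum, one_mul, Finset.sum_div]

/-! ### Optimising the scale -/

/-- `(1 + 1/m)^m ≤ m + 1`, in logarithmic form. -/
lemma mul_log_le {m : ℕ} (hm : 1 ≤ m) :
    (m : ℝ) * Real.log (((m : ℝ) + 1) / m) ≤ Real.log (m + 1) := by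
  rcases hm.eq_or_lt with rfl | hm2
  · norm_num
  have hm0 : (0 : ℝ) < m := by exact_mod_cast hm
  have h2 : (2 : ℝ) ≤ m := by exact_mod_cast hm2
  have h1 : Real.log (((m : ℝ) + 1) / m) ≤ 1 / m :=
    (Real.log_le_sub_one_of_pos (by positivity)).trans_eq (by field_simp; ring)
  have h3 : (m : ℝ) * Real.log (((m : ℝ) + 1) / m) ≤ 1 :=
    (mul_le_mul_of_nonneg_left h1 hm0.le).trans_eq (by field_simp)
  refine h3.trans ((Real.le_log_iff_exp_le (by positivity)).2 ?_)
  linarith [Real.exp_one_lt_d9]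

lemma bound_of_forall_scale {m : ℕ} (hm : 1 ≤ m) {h M : ℝ}
    (H : ∀ s : ℝ, 0 < s → h ≤ gaussLog m s + M / (2 * s)) :
    ((m : ℝ) + 1) / (2 * π * Real.exp 1) * Real.exp (2 / m * h) ≤ M := by
  have hm0 : (0 : ℝ) < m := by exact_mod_cast hm
  by_contra hlt
  rw [not_le] at hlt
  set T := ((m : ℝ) + 1) / (2 * π * Real.exp 1) * Real.exp (2 / m * h) with hT
  have hT0 : 0 < T := by positivity
  -- the scale at which the bound would be tight if the error were equal to `T`
  have hH := H (T / m) (by positivity)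
  have h1 : M / (2 * (T / m)) < m / 2 := by
    rw [div_lt_div_iff₀ (by positivity) (by positivity)]
    field_simp
    linarith
  have h2 : 2 * π * (T / m) = ((m : ℝ) + 1) / m * (Real.exp (2 / m * h) / Real.exp 1) := by
    rw [hT]; field_simp
  have h3 : Real.log (2 * π * (T / m)) = Real.log (((m : ℝ) + 1) / m) + (2 / m * h - 1) := by
    rw [h2, Real.log_mul (by positivity) (by positivity), ← Real.exp_sub, Real.log_exp]
  have h4 : (m : ℝ) / 2 * (2 / m * h) = h := by field_simp
  rw [gaussLog, h3] at hH
  have h5 := mul_log_le hm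
  nlinarith

/-- entropy lower bound on the optimal MSE for distribution
estimation. -/
theorem MSEdistr_ge_entropy_bound {a b : ℕ} (ha : 2 ≤ a) (hb : 2 ≤ b)
    (Q : Matrix (Fin b) (Fin a) ℝ)
    (hQpos : ∀ y x, 0 < Q y x) (hQcol : ∀ x, ∑ y, Q y x = 1)
    (μ : Measure (Fin a → ℝ)) [IsProbabilityMeasure μ]
    (f : (Fin (a - 1) → ℝ) → ℝ) (hf : IsDensity μ f) {n : ℕ} (hn : 1 ≤ n)
    (hfin : ∀ y : (Fin n → Fin b),
      IntegrableOn (fun q => gpost Q f y q * Real.log (gpost Q f y q))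
        (stdCorner (a - 1))) :
    (a : ℝ) / (2 * π * Real.exp 1) * Real.exp ((2 / ((a : ℝ) - 1)) * hCond Q f n) ≤
      MSEdistr (n := n) Q μ (PiOpt Q μ) := by
  obtain ⟨m, rfl⟩ : ∃ m, a = m + 1 := ⟨a - 1, by omega⟩
  have hm : 1 ≤ m := by omega
  have h := bound_of_forall_scale hm fun s hs =>
    hCond_le hm hQpos hQcol (f := f) hf hfin (PiOpt Q μ) hs
  push_cast
  rw [add_sub_cancel_right]
  exact h

end
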